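/- The traceless projector 𝒫_{m,n} (the GL(N)-equivariant projector of V^{m,n} onto the traceless subspace V₀^{m,n} along V₁^{m,n}) lies in the center of the centralizer algebra C_{m,n}(N) = End_{GL(N)}(V^{m,n}); in particular it commutes with all permutations of the m contravariant and n covariant factors. -/

import Mathlib

open scoped BigOperators

noncomputable section

/-- Mixed tensors of valence (m,n) on an N-dimensional space, given by components. -/
abbrev Tens (N m n : ℕ) := (Fin m → Fin N) → (Fin n → Fin N) → ℂ

namespace Mixed

variable (N : ℕ)

/-- Permutation of the contravariant (V) factors. -/
def permU (m n : ℕ) (p : Equiv.Perm (Fin m)) : Module.End ℂ (Tens N m n) where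
  toFun t := fun i j => t (i ∘ p) j
  map_add' t s := rfl
  map_smul' c t := rfl

/-- Permutation of the covariant (V*) factors. -/
def permD (m n : ℕ) (q : Equiv.Perm (Fin n)) : Module.End ℂ (Tens N m n) where
  toFun t := fun i j => t i (j ∘ q)
  map_add' t s := rfl
  map_smul' c t := rfl

/-- The contraction map `tr_{ab'}` (the result, a tensor of valence (m−1,n−1), is
recorded as a function not depending on the slots a, b). -/
def ctr (m n : ℕ) (a : Fin m) (b : Fin n) : Tens N m n →ₗ[ℂ] Tens N m n where
  toFun t := fun i j => ∑ k : Fin N,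
    t (Function.update i a k) (Function.update j b k)
  map_add' t s := by funext i j; simp [Finset.sum_add_distrib]
  map_smul' c t := by funext i j; simp [Finset.mul_sum]

/-- The contraction-insertion endomorphism `τ_{ab'} = tr⁺_{ab'} ∘ tr_{ab'}`. -/
def tauC (m n : ℕ) (a : Fin m) (b : Fin n) : Module.End ℂ (Tens N m n) where
  toFun t := fun i j =>
    if i a = j b then
      ∑ k : Fin N, t (Function.update i a k) (Function.update j b k)
    else 0
  map_add' t s := by
    funext i j; by_cases h : i a = j b <;> simp [h, Finset.sum_add_distrib]
  map_smul' c t := by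
    funext i j; by_cases h : i a = j b <;> simp [h, Finset.mul_sum]

/-- `𝒜_{m,n} = ∑_{a,b'} τ_{ab'}`. -/
def A (m n : ℕ) : Module.End ℂ (Tens N m n) :=
  ∑ a : Fin m, ∑ b : Fin n, tauC N m n a b

/-- The traceless subspace: common kernel of all contractions. -/
def traceless0 (m n : ℕ) : Submodule ℂ (Tens N m n) :=
  ⨅ a : Fin m, ⨅ b : Fin n, LinearMap.ker (ctr N m n a b)

/-- `ℒ_m`: the sum of the transpositions of the V-factors. -/
def LOp (m n : ℕ) : Module.End ℂ (Tens N m n) :=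
  ∑ x ∈ Finset.univ.filter (fun x : Fin m × Fin m => x.1 < x.2),
    permU N m n (Equiv.swap x.1 x.2)

/-- `ℛ_n`: the sum of the transpositions of the V*-factors. -/
def ROp (m n : ℕ) : Module.End ℂ (Tens N m n) :=
  ∑ x ∈ Finset.univ.filter (fun x : Fin n × Fin n => x.1 < x.2),
    permD N m n (Equiv.swap x.1 x.2)

/-- The (diagonal) action of GL(N) on mixed tensors: the contragredient action on
the covariant indices. -/
def glAct (m n : ℕ) (g : GL (Fin N) ℂ) : Module.End ℂ (Tens N m n) where
  toFun t := fun i j => ∑ i' : Fin m → Fin N, ∑ j' : Fin n → Fin N,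
    ((∏ a : Fin m, (g : Matrix (Fin N) (Fin N) ℂ) (i a) (i' a)) *
      ∏ b : Fin n, ((g⁻¹ : GL (Fin N) ℂ) : Matrix (Fin N) (Fin N) ℂ) (j' b) (j b)) *
        t i' j'
  map_add' t s := by
    funext i j
    simp only [Pi.add_apply, mul_add, Finset.sum_add_distrib]
  map_smul' c t := by
    funext i j
    simp only [Pi.smul_apply, smul_eq_mul, RingHom.id_apply, Finset.mul_sum]
    refine Finset.sum_congr rfl fun i' _ => Finset.sum_congr rfl fun j' _ => by ring

/-- The centraliser algebra `C_{m,n}(N) = End_{GL(N)}(V^{m,n})`. -/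
def Cent (m n : ℕ) : Subalgebra ℂ (Module.End ℂ (Tens N m n)) :=
  Subalgebra.centralizer ℂ (Set.range (glAct N m n))

end Mixed

namespace Mixed

/-- The subspace V₁^{m,n}: the span of the images of the insertion maps (equal to
the span of the images of the operators τ_{ab'}, since the contractions are
surjective). -/
def traceSpan0 (N m n : ℕ) : Submodule ℂ (Tens N m n) :=
  ⨆ a : Fin m, ⨆ b : Fin n, LinearMap.range (tauC N m n a b)

end Mixed

/-!
Partial transposition in the covariant factors turns the `GL(N)`-equivariant endomorphisms of
`V^{m,n}` into the matrices commuting with every `g^{⊗(m+n)}`, which by Schur–Weyl duality are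
spanned by the permutations `σ` of the `m + n` factors. Hence `C_{m,n}(N)` is spanned by the walled
Brauer diagrams of these `σ`. If `σ` respects the wall, its diagram is a permutation of the factors
and permutes the `τ_{ab'}` by conjugation. Otherwise its diagram `D` has an arc among its inputs and
another among its outputs, so that `D τ_{ab'} = N D` and `τ_{cd'} D = N D` for suitable `a`, `b'`,
`c`, `d'`; thus `D` kills `V₀` and has image in `V₁`. So `V₀` and `V₁` are stable under
`C_{m,n}(N)`, and the projector onto `V₀` along `V₁` commutes with it.

Schur–Weyl duality follows from the double centralizer theorem once a matrix `M` commuting with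
every `g^{⊗X}` is known to commute with every matrix `B` invariant under simultaneous permutations
of rows and columns. Such an `M` commutes with the tensor power of the generic matrix, and `B` is
the image of the latter under a linear functional applied entrywise to its monomials.
-/

section DoubleCentralizer

theorem exists_eq_smul_of_forall_commute {R A M : Type*} [CommRing R] [Ring A] [Algebra R A]
    [AddCommGroup M] [Module R M] [Module A M] [IsScalarTower R A M] [IsSemisimpleModule A M]
    [Module.Finite R M] {T : Module.End R M}
    (hT : ∀ B : Module.End A M, Commute T (B.restrictScalars R)) :
    ∃ a : A, ∀ v, T v = a • v := by
  let T' : Module.End (Module.End A M) M :=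
    { T with map_smul' := fun B v ↦ LinearMap.congr_fun (hT B).eq v }
  obtain ⟨s, hs⟩ := Module.Finite.fg_top (R := R) (M := M)
  obtain ⟨a, ha⟩ := jacobson_density T' s
  have hTa : T = Algebra.lsmul R R M a := LinearMap.ext_on hs ha
  exact ⟨a, LinearMap.congr_fun hTa⟩

theorem mem_span_range_of_forall_commute {K G W : Type*} [Field K] [Group G] [Finite G]
    [NeZero (Nat.card G : K)] [AddCommGroup W] [Module K W] [Module.Finite K W]
    (ρ : Representation K G W) {T : Module.End K W}
    (hT : ∀ B : Module.End K W, (∀ g, Commute B (ρ g)) → Commute T B) :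
    T ∈ Submodule.span K (Set.range ρ) := by
  let e := ρ.asModuleEquiv.conjAlgEquiv K
  have commute_rho (B : Module.End (MonoidAlgebra K G) ρ.asModule) (g : G) :
      Commute (e (B.restrictScalars K)) (ρ g) := by
    ext v
    change ρ.asModuleEquiv (B (ρ.asModuleEquiv.symm (ρ g v))) =
      ρ g (ρ.asModuleEquiv (B (ρ.asModuleEquiv.symm v)))
    rw [ρ.asModuleEquiv_symm_map_rho, map_smul, ρ.asModuleEquiv_map_smul, ρ.asAlgebraHom_of]
  obtain ⟨a, ha⟩ := exists_eq_smul_of_forall_commute (A := MonoidAlgebra K G) (T := e.symm T)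
    fun B ↦ by simpa only [e.symm_apply_apply] using (hT _ (commute_rho B)).map e.symm
  have hTa : T = ρ.asAlgebraHom a := LinearMap.ext fun v ↦
    congrArg ρ.asModuleEquiv (ha (ρ.asModuleEquiv.symm v))
  rw [hTa, Representation.asAlgebraHom, MonoidAlgebra.lift_apply]
  exact Submodule.sum_mem _ fun g _ ↦
    Submodule.smul_mem _ _ (Submodule.subset_span (Set.mem_range_self g))

end DoubleCentralizer

section TensorPower

open Matrix MvPolynomial

theorem exists_perm_comp_eq_of_sum_single_eq {X α : Type*} [Fintype X] {f g : X → α}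
    (h : ∑ x, Finsupp.single (f x) 1 = ∑ x, Finsupp.single (g x) 1) :
    ∃ σ : Equiv.Perm X, g ∘ σ = f := by
  classical
  have card_fiber (c : α) :
      Fintype.card {x // f x = c} = Fintype.card {x // g x = c} := by
    simpa [Finsupp.single_apply, Fintype.card_subtype] using DFunLike.congr_fun h c
  let σ := Equiv.ofFiberEquiv fun c ↦ Fintype.equivOfCardEq (card_fiber c)
  exact ⟨σ, funext fun x ↦ Equiv.ofFiberEquiv_map _ x⟩

variable {X ι K : Type*} [Fintype X]

/-- The tensor power `A^{⊗X}`, indexed by words `X → ι`. -/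
def tensorPower (X : Type*) [Fintype X] [CommSemiring K] (A : Matrix ι ι K) :
    Matrix (X → ι) (X → ι) K :=
  of fun r s ↦ ∏ x, A (r x) (s x)

/-- The exponent of the monomial `∏ x, X (r x, s x)`: it counts how often each letter of `ι × ι`
occurs in the double word `(r, s)`. -/
def content (r s : X → ι) : ι × ι →₀ ℕ :=
  ∑ x, Finsupp.single (r x, s x) 1

theorem tensorPower_mvPolynomialX_apply [CommSemiring K] (r s : X → ι) :
    tensorPower X (mvPolynomialX ι ι K) r s = monomial (content r s) 1 :=
  (monomial_sum_one _ _).symm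

theorem exists_eq_content [Nonempty K] {B : Matrix (X → ι) (X → ι) K}
    (hB : ∀ (σ : Equiv.Perm X) r s, B (r ∘ σ) (s ∘ σ) = B r s) :
    ∃ b : (ι × ι →₀ ℕ) → K, ∀ r s, B r s = b (content r s) := by
  have factors : Function.FactorsThrough (fun w : (X → ι) × (X → ι) ↦ B w.1 w.2)
      fun w ↦ content w.1 w.2 := by
    rintro ⟨r, s⟩ ⟨r', s'⟩ h
    obtain ⟨σ, hσ⟩ := exists_perm_comp_eq_of_sum_single_eq h
    have hr : r' ∘ σ = r := funext fun x ↦ congrArg Prod.fst (congrFun hσ x)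
    have hs : s' ∘ σ = s := funext fun x ↦ congrArg Prod.snd (congrFun hσ x)
    simpa only [hr, hs] using hB σ r' s'
  obtain ⟨b, hb⟩ := (Function.factorsThrough_iff _).1 factors
  exact ⟨b, fun r s ↦ congrFun hb (r, s)⟩

theorem tensorPower_map {L : Type*} [CommSemiring K] [CommSemiring L] (f : K →+* L)
    (A : Matrix ι ι K) : (tensorPower X A).map f = tensorPower X (A.map f) :=
  Matrix.ext fun _ _ ↦ map_prod f _ _

theorem tensorPower_one [CommSemiring K] [DecidableEq ι] :
    tensorPower X (1 : Matrix ι ι K) = 1 := by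
  ext r s
  simp [tensorPower, one_apply, Finset.prod_ite_zero, funext_iff]

variable [DecidableEq X] [Fintype ι]

theorem tensorPower_mul [CommSemiring K] (A B : Matrix ι ι K) :
    tensorPower X (A * B) = tensorPower X A * tensorPower X B := by
  ext r s
  simp [tensorPower, Matrix.mul_apply, Finset.prod_univ_sum, Finset.prod_mul_distrib]

variable [DecidableEq ι]

/-- The action of the permutations of `X` on the tensor power `(K^ι)^{⊗X}`, by the matrices
`(r, s) ↦ if r ∘ σ = s then 1 else 0`. -/
def permTensor (ι K : Type*) [Fintype ι] [DecidableEq ι] [CommSemiring K] :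
    Equiv.Perm X →* Matrix (X → ι) (X → ι) K where
  toFun σ := Equiv.Perm.permMatrix K (σ.symm.arrowCongr (.refl ι))
  map_one' := permMatrix_one
  map_mul' σ τ := by rw [← permMatrix_mul]; rfl

section CommSemiring

variable [CommSemiring K]

theorem permTensor_apply (σ : Equiv.Perm X) (r s : X → ι) :
    permTensor ι K σ r s = if r ∘ σ = s then 1 else 0 :=
  if_congr Option.some_inj rfl rfl

theorem permTensor_mul_apply (σ : Equiv.Perm X) (B : Matrix (X → ι) (X → ι) K)
    (r s : X → ι) : (permTensor ι K σ * B) r s = B (r ∘ σ) s :=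
  congrFun₂ (PEquiv.toMatrix_toPEquiv_mul _ B) r s

theorem mul_permTensor_apply_comp (σ : Equiv.Perm X) (B : Matrix (X → ι) (X → ι) K)
    (r s : X → ι) : (B * permTensor ι K σ) r (s ∘ σ) = B r s := by
  rw [mul_apply]
  simp [permTensor_apply, σ.surjective.injective_comp_right.eq_iff]

theorem commute_permTensor_iff {σ : Equiv.Perm X}
    {B : Matrix (X → ι) (X → ι) K} :
    Commute B (permTensor ι K σ) ↔ ∀ r s, B (r ∘ σ) (s ∘ σ) = B r s := by
  have comp_surjective : Function.Surjective fun s : X → ι ↦ s ∘ σ :=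
    (σ.symm.arrowCongr (.refl ι)).surjective
  rw [commute_iff_eq, eq_comm, ← Matrix.ext_iff]
  refine forall_congr' fun r ↦ comp_surjective.forall.trans <| forall_congr' fun s ↦ ?_
  rw [mul_permTensor_apply_comp, permTensor_mul_apply]

theorem commute_tensorPower_permTensor (A : Matrix ι ι K) (σ : Equiv.Perm X) :
    Commute (tensorPower X A) (permTensor ι K σ) :=
  commute_permTensor_iff.2 fun r s ↦ Equiv.prod_comp σ fun x ↦ A (r x) (s x)

theorem transpose_permTensor (σ : Equiv.Perm X) :
    (permTensor ι K σ)ᵀ = permTensor ι K σ⁻¹ :=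
  transpose_permMatrix _

end CommSemiring

variable [Field K] [Infinite K] {M B : Matrix (X → ι) (X → ι) K}

theorem commute_map_C_tensorPower_mvPolynomialX
    (hM : ∀ g : GL ι K, Commute M (tensorPower X g.val)) :
    Commute (M.map C) (tensorPower X (mvPolynomialX ι ι K)) := by
  let Y := tensorPower X (mvPolynomialX ι ι K)
  let D : Matrix (X → ι) (X → ι) (MvPolynomial (ι × ι) K) := M.map C * Y - Y * M.map C
  suffices ∀ r s, det (mvPolynomialX ι ι K) * D r s = 0 from
    sub_eq_zero.1 <| Matrix.ext fun r s ↦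
      (mul_eq_zero.1 (this r s)).resolve_left (det_mvPolynomialX_ne_zero ι K)
  refine fun r s ↦ MvPolynomial.funext fun y ↦ ?_
  let A : Matrix ι ι K := of fun i j ↦ y (i, j)
  have eval_M : (eval y).mapMatrix (M.map C) = M := Matrix.ext fun _ _ ↦ eval_C _
  have eval_Y : (eval y).mapMatrix Y = tensorPower X A :=
    (tensorPower_map _ _).trans (congrArg _ (mvPolynomialX_mapMatrix_eval A))
  have eval_D : (eval y).mapMatrix D = M * tensorPower X A - tensorPower X A * M := by
    simp only [D, map_sub, map_mul, eval_M, eval_Y]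
  rw [map_mul, map_zero, eval_det_mvPolynomialX, mul_eq_zero, or_iff_not_imp_left]
  intro hA
  have hMA : Commute M (tensorPower X A) := hM (GeneralLinearGroup.mkOfDetNeZero A hA)
  exact congrFun₂ (eval_D.trans (sub_eq_zero.2 hMA.eq)) r s

theorem commute_of_forall_commute_tensorPower
    (hM : ∀ g : GL ι K, Commute M (tensorPower X g.val))
    (hB : ∀ σ, Commute B (permTensor ι K σ)) : Commute M B := by
  obtain ⟨b, hb⟩ := exists_eq_content fun σ ↦ commute_permTensor_iff.1 (hB σ)
  -- `φ` maps the tensor power of the generic matrix entrywise to `B`.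
  let φ : MvPolynomial (ι × ι) K →ₗ[K] K := (basisMonomials (ι × ι) K).constr K b
  have φ_monomial (d : ι × ι →₀ ℕ) : φ (monomial d 1) = b d := by
    simpa using (basisMonomials (ι × ι) K).constr_basis K b d
  have generic := commute_map_C_tensorPower_mvPolynomialX hM
  ext r s
  simpa [Matrix.mul_apply, tensorPower_mvPolynomialX_apply, C_mul', mul_comm _ (C _), φ_monomial,
    ← hb, mul_comm] using congrArg φ (congrFun₂ generic.eq r s)

theorem mem_span_range_permTensor [NeZero (Nat.card (Equiv.Perm X) : K)]
    (hM : ∀ g : GL ι K, Commute M (tensorPower X g.val)) :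
    M ∈ Submodule.span K (Set.range (permTensor (X := X) ι K)) := by
  let e : Matrix (X → ι) (X → ι) K ≃ₐ[K] Module.End K ((X → ι) → K) := toLinAlgEquiv'
  let ρ : Representation K (Equiv.Perm X) ((X → ι) → K) :=
    (e : _ →* Module.End K ((X → ι) → K)).comp (permTensor ι K)
  have h := mem_span_range_of_forall_commute ρ (T := e M) fun B hB ↦ by
    have hB' (σ) : Commute (e.symm B) (permTensor ι K σ) := by
      simpa [ρ] using (hB σ).map e.symm
    simpa using (commute_of_forall_commute_tensorPower hM hB').map e
  have mem_map := Submodule.mem_map_of_mem (f := e.symm.toLinearMap) h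
  rw [Submodule.map_span, ← Set.range_comp] at mem_map
  simpa [ρ, Function.comp_def] using mem_map

end TensorPower

section PartialTranspose

open Matrix
open scoped Kronecker

variable {I I' J J' R : Type*}

/-- The partial transposition, exchanging the second components of the row and column indices. -/
def partialTranspose (I I' J J' R : Type*) [Semiring R] :
    Matrix (I × J) (I' × J') R ≃ₗ[R] Matrix (I × J') (I' × J) R where
  toFun M := of fun p q ↦ M (p.1, q.2) (q.1, p.2)
  invFun M := of fun p q ↦ M (p.1, q.2) (q.1, p.2)
  map_add' _ _ := rfl
  map_smul' _ _ := rfl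

theorem partialTranspose_apply [Semiring R] (M : Matrix (I × J) (I' × J') R) (p : I × J')
    (q : I' × J) : partialTranspose I I' J J' R M p q = M (p.1, q.2) (q.1, p.2) :=
  rfl

variable [Fintype I] [Fintype J] [DecidableEq J] [CommRing R]

theorem kronecker_mul_partialTranspose [DecidableEq I] (A : Matrix I I R) (C : Matrix J J R)
    (M : Matrix (I × J) (I × J) R) :
    (A ⊗ₖ C) * partialTranspose I I J J R M =
      partialTranspose I I J J R ((A ⊗ₖ 1) * M * (1 ⊗ₖ Cᵀ)) := by
  ext p q
  simp [partialTranspose_apply, Matrix.mul_apply, one_apply, Fintype.sum_prod_type,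
    Finset.mul_sum, mul_assoc, mul_left_comm, mul_comm]

theorem partialTranspose_mul_kronecker [DecidableEq I] (A : Matrix I I R) (C : Matrix J J R)
    (M : Matrix (I × J) (I × J) R) :
    partialTranspose I I J J R M * (A ⊗ₖ C) =
      partialTranspose I I J J R ((1 ⊗ₖ Cᵀ) * M * (A ⊗ₖ 1)) := by
  ext p q
  simp [partialTranspose_apply, Matrix.mul_apply, one_apply, Fintype.sum_prod_type_right,
    Finset.mul_sum, mul_assoc, mul_left_comm, mul_comm]

theorem commute_partialTranspose_iff {A : Matrix I I R} {Y Y' : Matrix J J R} (hY : Y * Y' = 1)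
    {M : Matrix (I × J) (I × J) R} :
    Commute (partialTranspose I I J J R M) (A ⊗ₖ Y'ᵀ) ↔ Commute M (A ⊗ₖ Y) := by
  classical
  let u : (Matrix (I × J) (I × J) R)ˣ :=
    ⟨1 ⊗ₖ Y, 1 ⊗ₖ Y', by simp [← mul_kronecker_mul, hY],
      by simp [← mul_kronecker_mul, mul_eq_one_comm.1 hY]⟩
  have right_factor : A ⊗ₖ Y = (A ⊗ₖ 1) * u.val := by simp [u, ← mul_kronecker_mul]
  have left_factor : A ⊗ₖ Y = u.val * (A ⊗ₖ 1) := by simp [u, ← mul_kronecker_mul]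
  calc
    _ ↔ u⁻¹.val * M * (A ⊗ₖ 1) = (A ⊗ₖ 1) * M * u⁻¹.val := by
      rw [commute_iff_eq, partialTranspose_mul_kronecker, kronecker_mul_partialTranspose,
        transpose_transpose, EmbeddingLike.apply_eq_iff_eq]
      rfl
    _ ↔ M * ((A ⊗ₖ 1) * u.val) = u.val * (A ⊗ₖ 1) * M := by
      rw [mul_assoc u⁻¹.val, Units.inv_mul_eq_iff_eq_mul, ← mul_assoc, ← mul_assoc,
        Units.eq_mul_inv_iff_mul_eq, mul_assoc M]
    _ ↔ _ := by rw [← right_factor, ← left_factor, commute_iff_eq]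

end PartialTranspose

section MixedMatrix

open Matrix
open scoped Kronecker

variable {X Y ι K : Type*} [Fintype X] [Fintype Y]

theorem reindex_tensorPower_sum [CommSemiring K] (A : Matrix ι ι K) :
    reindex (.sumArrowEquivProdArrow X Y ι) (.sumArrowEquivProdArrow X Y ι)
      (tensorPower (X ⊕ Y) A) = tensorPower X A ⊗ₖ tensorPower Y A :=
  Matrix.ext fun _ _ ↦ Fintype.prod_sum_type _

/-- Moving the tensor factors in `Y` to the dual side: an endomorphism of `V^{⊗X} ⊗ V^{⊗Y}`
becomes one of `V^{⊗X} ⊗ (V*)^{⊗Y}`. -/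
def mixedMatrix (X Y ι K : Type*) [CommSemiring K] : Matrix (X ⊕ Y → ι) (X ⊕ Y → ι) K ≃ₗ[K]
    Matrix ((X → ι) × (Y → ι)) ((X → ι) × (Y → ι)) K :=
  (reindexLinearEquiv K K (.sumArrowEquivProdArrow X Y ι) (.sumArrowEquivProdArrow X Y ι)).trans
    (partialTranspose _ _ _ _ K)

variable [DecidableEq X] [DecidableEq Y] [Fintype ι] [DecidableEq ι]

theorem commute_mixedMatrix_iff [CommRing K] {M : Matrix (X ⊕ Y → ι) (X ⊕ Y → ι) K}
    (g : GL ι K) :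
    Commute (mixedMatrix X Y ι K M) (tensorPower X g.val ⊗ₖ (tensorPower Y g⁻¹.val)ᵀ) ↔
      Commute M (tensorPower (X ⊕ Y) g.val) := by
  have h : tensorPower Y g.val * tensorPower Y g⁻¹.val = 1 := by
    rw [← tensorPower_mul, Units.mul_inv, tensorPower_one]
  rw [mixedMatrix, LinearEquiv.trans_apply, commute_partialTranspose_iff h,
    ← reindex_tensorPower_sum]
  exact commute_map_iff (f := reindexAlgEquiv K K (.sumArrowEquivProdArrow X Y ι))
    (AlgEquiv.injective _)

/-- The walled Brauer diagram obtained from `σ` by bending the strands in `Y` to the opposite side,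
acting on `V^{⊗X} ⊗ (V*)^{⊗Y}`. -/
def diagramMatrix (ι K : Type*) [Fintype ι] [DecidableEq ι] [CommSemiring K]
    (σ : Equiv.Perm (X ⊕ Y)) : Matrix ((X → ι) × (Y → ι)) ((X → ι) × (Y → ι)) K :=
  mixedMatrix X Y ι K (permTensor ι K σ)

theorem diagramMatrix_apply [CommSemiring K] (σ : Equiv.Perm (X ⊕ Y)) (p q : (X → ι) × (Y → ι)) :
    diagramMatrix ι K σ p q = if Sum.elim p.1 q.2 ∘ σ = Sum.elim q.1 p.2 then 1 else 0 :=
  permTensor_apply σ _ _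

theorem transpose_diagramMatrix [CommSemiring K] (σ : Equiv.Perm (X ⊕ Y)) :
    (diagramMatrix ι K σ)ᵀ = diagramMatrix ι K σ⁻¹ :=
  congrArg (mixedMatrix X Y ι K) (transpose_permTensor σ)

theorem commute_diagramMatrix [CommRing K] (σ : Equiv.Perm (X ⊕ Y)) (g : GL ι K) :
    Commute (diagramMatrix ι K σ) (tensorPower X g.val ⊗ₖ (tensorPower Y g⁻¹.val)ᵀ) :=
  (commute_mixedMatrix_iff g).2 (commute_tensorPower_permTensor _ σ).symm

theorem mem_span_range_diagramMatrix [Field K] [Infinite K]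
    [NeZero (Nat.card (Equiv.Perm (X ⊕ Y)) : K)]
    {E : Matrix ((X → ι) × (Y → ι)) ((X → ι) × (Y → ι)) K}
    (hE : ∀ g : GL ι K, Commute E (tensorPower X g.val ⊗ₖ (tensorPower Y g⁻¹.val)ᵀ)) :
    E ∈ Submodule.span K (Set.range (diagramMatrix (X := X) (Y := Y) ι K)) := by
  obtain ⟨M, rfl⟩ := (mixedMatrix X Y ι K).surjective E
  have hM : M ∈ Submodule.span K (Set.range (permTensor (X := X ⊕ Y) ι K)) :=
    mem_span_range_permTensor fun g ↦ (commute_mixedMatrix_iff g).1 (hE g)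
  have mem_map := Submodule.mem_map_of_mem (f := (mixedMatrix X Y ι K).toLinearMap) hM
  rwa [Submodule.map_span, ← Set.range_comp] at mem_map

end MixedMatrix

theorem update_eq_update_iff_of_apply_eq {α β : Type*} [DecidableEq α] {f g : α → β} {a : α}
    (h : f a = g a) {b : β} : Function.update f a b = Function.update g a b ↔ f = g := by
  refine ⟨fun hfg ↦ ?_, fun hfg ↦ hfg ▸ rfl⟩
  rw [← Function.update_eq_self a f, ← Function.update_idem b, hfg, h, Function.update_idem,
    Function.update_eq_self]

theorem exists_eq_sumCongr_or_crosses {X Y : Type*} [Finite X] [Finite Y]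
    (σ : Equiv.Perm (X ⊕ Y)) :
    (∃ p q, σ = Equiv.sumCongr p q) ∨
      (∃ x y, σ (.inl x) = .inr y) ∧ ∃ y x, σ (.inr y) = .inl x := by
  by_cases inl_invariant : Set.MapsTo σ (Set.range Sum.inl) (Set.range Sum.inl)
  · obtain ⟨⟨p, q⟩, rfl⟩ := Equiv.Perm.mem_sumCongrHom_range_of_perm_mapsTo_inl inl_invariant
    exact .inl ⟨p, q, rfl⟩
  · have inr_not_invariant := mt (Equiv.Perm.perm_mapsTo_inl_iff_mapsTo_inr σ).2 inl_invariant
    simp only [Set.mapsTo_range_iff, not_forall, ← Set.mem_compl_iff, Set.compl_range_inl,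
      Set.compl_range_inr] at inl_invariant inr_not_invariant
    exact .inr ⟨inl_invariant.imp fun _ ↦ .imp fun _ ↦ .symm,
      inr_not_invariant.imp fun _ ↦ .imp fun _ ↦ .symm⟩

namespace Mixed

open Matrix
open scoped Kronecker

variable {N m n : ℕ}

/-- The identification of `End(V^{m,n})` with matrices in the standard basis. -/
def tensMatrixEquiv (N m n : ℕ) :
    Matrix ((Fin m → Fin N) × (Fin n → Fin N)) ((Fin m → Fin N) × (Fin n → Fin N)) ℂ ≃ₐ[ℂ]
      Module.End ℂ (Tens N m n) :=
  toLinAlgEquiv'.trans ((LinearEquiv.curry ℂ ℂ (Fin m → Fin N) (Fin n → Fin N)).conjAlgEquiv ℂ)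

theorem tensMatrixEquiv_apply
    (E : Matrix ((Fin m → Fin N) × (Fin n → Fin N)) ((Fin m → Fin N) × (Fin n → Fin N)) ℂ)
    (t : Tens N m n) (i : Fin m → Fin N) (j : Fin n → Fin N) :
    tensMatrixEquiv N m n E t i j = ∑ i', ∑ j', E (i, j) (i', j') * t i' j' :=
  Fintype.sum_prod_type _

theorem glAct_eq_tensMatrixEquiv (g : GL (Fin N) ℂ) : glAct N m n g =
    tensMatrixEquiv N m n (tensorPower (Fin m) g.val ⊗ₖ (tensorPower (Fin n) g⁻¹.val)ᵀ) := by
  refine LinearMap.ext fun t ↦ funext₂ fun i j ↦ ?_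
  rw [tensMatrixEquiv_apply]
  rfl

/-- The endomorphism of `V^{m,n}` given by a walled Brauer diagram. -/
def diagram (N : ℕ) (σ : Equiv.Perm (Fin m ⊕ Fin n)) : Module.End ℂ (Tens N m n) :=
  tensMatrixEquiv N m n (diagramMatrix (Fin N) ℂ σ)

theorem diagram_apply (σ : Equiv.Perm (Fin m ⊕ Fin n)) (t : Tens N m n) (i : Fin m → Fin N)
    (j : Fin n → Fin N) :
    diagram N σ t i j =
      ∑ i', ∑ j', if Sum.elim i j' ∘ σ = Sum.elim i' j then t i' j' else 0 := by
  simp [diagram, tensMatrixEquiv_apply, diagramMatrix_apply]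

theorem diagram_mem_Cent (σ : Equiv.Perm (Fin m ⊕ Fin n)) : diagram N σ ∈ Cent N m n := by
  rintro _ ⟨g, rfl⟩
  rw [glAct_eq_tensMatrixEquiv]
  exact ((commute_diagramMatrix σ g).map (tensMatrixEquiv N m n)).eq.symm

theorem Cent_le_span_range_diagram :
    Subalgebra.toSubmodule (Cent N m n) ≤
      Submodule.span ℂ (Set.range (diagram (m := m) (n := n) N)) := by
  intro f hf
  obtain ⟨E, rfl⟩ := (tensMatrixEquiv N m n).surjective f
  have : NeZero (Nat.card (Equiv.Perm (Fin m ⊕ Fin n)) : ℂ) :=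
    ⟨Nat.cast_ne_zero.2 Nat.card_pos.ne'⟩
  have hE : E ∈ Submodule.span ℂ (Set.range (diagramMatrix (Fin N) ℂ)) :=
    mem_span_range_diagramMatrix fun g ↦ by
      have h : Commute (tensMatrixEquiv N m n E) (glAct N m n g) := (hf _ ⟨g, rfl⟩).symm
      rwa [glAct_eq_tensMatrixEquiv, commute_map_iff (tensMatrixEquiv N m n).injective] at h
  have mem_map := Submodule.mem_map_of_mem (f := (tensMatrixEquiv N m n).toLinearMap) hE
  rwa [Submodule.map_span, ← Set.range_comp] at mem_map

theorem diagram_sumCongr (p : Equiv.Perm (Fin m)) (q : Equiv.Perm (Fin n)) :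
    diagram N (.sumCongr p q) = permU N m n p * permD N m n q⁻¹ := by
  refine LinearMap.ext fun t ↦ funext₂ fun i j ↦ ?_
  have elim_comp_eq_iff (i' j') : Sum.elim i j' ∘ Equiv.sumCongr p q = Sum.elim i' j ↔
      i' = i ∘ p ∧ j' = j ∘ ⇑q⁻¹ := by
    have comp_sumCongr : Sum.elim i j' ∘ Equiv.sumCongr p q = Sum.elim (i ∘ p) (j' ∘ q) :=
      Sum.elim_comp_map
    rw [comp_sumCongr, Sum.elim_eq_iff, eq_comm (a := i ∘ p), ← Equiv.eq_comp_symm]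
    rfl
  simp only [diagram_apply, elim_comp_eq_iff, ite_and, Finset.sum_ite_irrel, Finset.sum_const_zero,
    Finset.sum_ite_eq', Finset.mem_univ, if_true]
  rfl

theorem tauC_eq_diagram (a : Fin m) (b : Fin n) :
    tauC N m n a b = diagram N (.swap (.inl a) (.inr b)) := by
  refine LinearMap.ext fun t ↦ funext₂ fun i j ↦ ?_
  have elim_comp_eq_iff (i' j') :
      Sum.elim i j' ∘ Equiv.swap (.inl a) (.inr b) = Sum.elim i' j ↔
        i' = Function.update i a (j' b) ∧ Function.update j' b (i a) = j := by
    rw [Equiv.comp_swap_eq_update, Sum.elim_inl, Sum.elim_inr, ← Sum.elim_update_right,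
      ← Sum.elim_update_left, Sum.elim_eq_iff, eq_comm (b := i')]
  simp only [diagram_apply, elim_comp_eq_iff, ite_and]
  rw [Finset.sum_comm]
  simp only [Finset.sum_ite_eq', Finset.mem_univ, if_true]
  by_cases hij : i a = j b
  · refine (if_pos hij).trans <| Fintype.sum_of_injective _ (Function.update_injective j b) _ _
      (fun j' hj' ↦ if_neg fun h ↦ hj' ⟨j' b, ?_⟩) fun k ↦ ?_
    · rw [← h, Function.update_idem, Function.update_eq_self]
    · rw [Function.update_self, Function.update_idem, hij, Function.update_eq_self, if_pos rfl]
  · exact (if_neg hij).trans <| .symm <| Finset.sum_eq_zero fun j' _ ↦ if_neg fun h ↦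
      hij (by rw [← h, Function.update_self])

theorem tauC_mul_diagram_of_apply_inr {σ : Equiv.Perm (Fin m ⊕ Fin n)} {a : Fin m} {b : Fin n}
    (h : σ (.inr b) = .inl a) : tauC N m n a b * diagram N σ = N • diagram N σ := by
  refine LinearMap.ext fun t ↦ funext₂ fun i j ↦ ?_
  have apply_inr (i' j') (hσ : Sum.elim i j' ∘ σ = Sum.elim i' j) : i a = j b := by
    simpa [h] using congrFun hσ (.inr b)
  by_cases hij : i a = j b
  · have diagram_update (k : Fin N) :
        diagram N σ t (Function.update i a k) (Function.update j b k) = diagram N σ t i j := by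
      rw [diagram_apply, diagram_apply]
      refine Finset.sum_congr rfl fun i' _ ↦ Finset.sum_congr rfl fun j' _ ↦ if_congr ?_ rfl rfl
      rw [Sum.elim_update_left, Sum.elim_update_right, ← h,
        Function.update_comp_eq_of_injective _ σ.injective]
      exact update_eq_update_iff_of_apply_eq (by simpa [h] using hij)
    exact (if_pos hij).trans (by simp [diagram_update])
  · have diagram_eq_zero : diagram N σ t i j = 0 := by
      rw [diagram_apply]
      exact Finset.sum_eq_zero fun i' _ ↦ Finset.sum_eq_zero fun j' _ ↦
        if_neg fun hσ ↦ hij (apply_inr i' j' hσ)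
    exact (if_neg hij).trans (by simp [diagram_eq_zero])

theorem diagram_mul_tauC_of_apply_inl {σ : Equiv.Perm (Fin m ⊕ Fin n)} {a : Fin m} {b : Fin n}
    (h : σ (.inl a) = .inr b) : diagram N σ * tauC N m n a b = N • diagram N σ := by
  have h' : σ⁻¹ (.inr b) = .inl a := by rw [Equiv.Perm.inv_eq_iff_eq, h]
  have transposed := tauC_mul_diagram_of_apply_inr (N := N) h'
  rw [tauC_eq_diagram, diagram, diagram, ← map_mul, ← map_nsmul, EmbeddingLike.apply_eq_iff_eq,
    ← transpose_inj, transpose_mul, transpose_smul, transpose_diagramMatrix,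
    transpose_diagramMatrix, inv_inv, Equiv.swap_inv] at transposed
  rw [tauC_eq_diagram, diagram, diagram, ← map_mul, ← map_nsmul, transposed]

theorem permU_mul_permD_mul_tauC (p : Equiv.Perm (Fin m)) (q : Equiv.Perm (Fin n)) (a : Fin m)
    (b : Fin n) :
    permU N m n p * permD N m n q * tauC N m n a b =
      tauC N m n (p a) (q b) * (permU N m n p * permD N m n q) := by
  refine LinearMap.ext fun t ↦ funext₂ fun i j ↦ ?_
  have update_comp_perm {k : ℕ} (r : Fin k → Fin N) (τ : Equiv.Perm (Fin k)) (c : Fin k)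
      (z : Fin N) : Function.update r (τ c) z ∘ τ = Function.update (r ∘ τ) c z :=
    Function.update_comp_eq_of_injective r τ.injective c z
  simp [permU, permD, tauC, update_comp_perm]

theorem traceless0_eq_iInf_ker_tauC :
    traceless0 N m n = ⨅ a, ⨅ b, LinearMap.ker (tauC N m n a b) := by
  refine iInf_congr fun a ↦ iInf_congr fun b ↦ Submodule.ext fun t ↦ ?_
  simp only [LinearMap.mem_ker]
  constructor
  · intro ht
    exact funext₂ fun i j ↦ ite_eq_right_iff.2 fun _ ↦ congrFun₂ ht i j
  · intro ht
    refine funext₂ fun i j ↦ ?_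
    simpa [tauC, ctr] using congrFun₂ ht i (Function.update j b (i a))

theorem traceless0_mem_invtSubmodule {f : Module.End ℂ (Tens N m n)}
    (hf : ∀ a b, ∃ a' b' g, tauC N m n a b * f = g * tauC N m n a' b') :
    traceless0 N m n ∈ f.invtSubmodule := by
  simp only [traceless0_eq_iInf_ker_tauC, Module.End.mem_invtSubmodule_iff_forall_mem_of_mem,
    Submodule.mem_iInf, LinearMap.mem_ker]
  intro t ht a b
  obtain ⟨a', b', g, h⟩ := hf a b
  simpa [ht a' b'] using LinearMap.congr_fun h t

theorem traceSpan0_mem_invtSubmodule {f : Module.End ℂ (Tens N m n)}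
    (hf : ∀ a b, ∃ a' b' g, f * tauC N m n a b = tauC N m n a' b' * g) :
    traceSpan0 N m n ∈ f.invtSubmodule := by
  rw [Module.End.mem_invtSubmodule, traceSpan0, iSup₂_le_iff]
  rintro a b _ ⟨t, rfl⟩
  obtain ⟨a', b', g, h⟩ := hf a b
  exact Submodule.mem_iSup_of_mem a' <| Submodule.mem_iSup_of_mem b'
    ⟨g t, LinearMap.congr_fun h.symm t⟩

theorem exists_tauC_mul_diagram_eq [NeZero N] (σ : Equiv.Perm (Fin m ⊕ Fin n)) (a : Fin m)
    (b : Fin n) : ∃ a' b' g, tauC N m n a b * diagram N σ = g * tauC N m n a' b' := by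
  rcases exists_eq_sumCongr_or_crosses σ with ⟨p, q, rfl⟩ | ⟨⟨a', b', hσ⟩, -⟩
  · refine ⟨p⁻¹ a, q b, permU N m n p * permD N m n q⁻¹, ?_⟩
    rw [diagram_sumCongr, permU_mul_permD_mul_tauC]
    simp
  · refine ⟨a', b', (N : ℂ)⁻¹ • (tauC N m n a b * diagram N σ), ?_⟩
    rw [smul_mul_assoc, mul_assoc, diagram_mul_tauC_of_apply_inl hσ, mul_smul_comm,
      ← Nat.cast_smul_eq_nsmul ℂ, inv_smul_smul₀ (NeZero.ne _)]

theorem exists_diagram_mul_tauC_eq [NeZero N] (σ : Equiv.Perm (Fin m ⊕ Fin n)) (a : Fin m)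
    (b : Fin n) : ∃ a' b' g, diagram N σ * tauC N m n a b = tauC N m n a' b' * g := by
  rcases exists_eq_sumCongr_or_crosses σ with ⟨p, q, rfl⟩ | ⟨-, b', a', hσ⟩
  · rw [diagram_sumCongr]
    exact ⟨_, _, _, permU_mul_permD_mul_tauC p q⁻¹ a b⟩
  · refine ⟨a', b', (N : ℂ)⁻¹ • (diagram N σ * tauC N m n a b), ?_⟩
    rw [mul_smul_comm, ← mul_assoc, tauC_mul_diagram_of_apply_inr hσ, smul_mul_assoc,
      ← Nat.cast_smul_eq_nsmul ℂ, inv_smul_smul₀ (NeZero.ne _)]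

theorem tauC_mul_glAct (a : Fin m) (b : Fin n) (g : GL (Fin N) ℂ) :
    tauC N m n a b * glAct N m n g = glAct N m n g * tauC N m n a b := by
  rw [tauC_eq_diagram]
  exact (diagram_mem_Cent _ _ ⟨g, rfl⟩).symm

theorem commute_of_range_eq_of_ker_eq {P f : Module.End ℂ (Tens N m n)}
    (hP : IsIdempotentElem P) (hrange : LinearMap.range P = traceless0 N m n)
    (hker : LinearMap.ker P = traceSpan0 N m n)
    (hl : ∀ a b, ∃ a' b' g, tauC N m n a b * f = g * tauC N m n a' b')
    (hr : ∀ a b, ∃ a' b' g, f * tauC N m n a b = tauC N m n a' b' * g) :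
    Commute P f := by
  rw [LinearMap.IsIdempotentElem.commute_iff hP, hrange, hker]
  exact ⟨traceless0_mem_invtSubmodule hl, traceSpan0_mem_invtSubmodule hr⟩

theorem commute_of_mem_Cent {P f : Module.End ℂ (Tens N m n)}
    (hP : ∀ σ, Commute P (diagram N σ)) (hf : f ∈ Cent N m n) : Commute P f := by
  replace hf := Cent_le_span_range_diagram hf
  induction hf using Submodule.span_induction with
  | mem f hf => obtain ⟨σ, rfl⟩ := hf; exact hP σ
  | zero => exact .zero_right P
  | add f g _ _ hf hg => exact hf.add_right hg
  | smul c f _ hf => exact hf.smul_right c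

end Mixed

/-- the traceless projector 𝒫_{m,n} — the idempotent with image the
traceless subspace V₀^{m,n} and kernel V₁^{m,n} — lies in the centre of the
centraliser algebra C_{m,n}(N) = End_{GL(N)}(V^{m,n}); in particular it commutes
with all permutations of the contravariant and covariant factors. -/
theorem traceless_projector_central (N m n : ℕ) (hm : 1 ≤ m) (hn : 1 ≤ n)
    (hN : 1 ≤ N) (P : Module.End ℂ (Tens N m n))
    (hidem : IsIdempotentElem P)
    (hrange : LinearMap.range P = Mixed.traceless0 N m n)
    (hker : LinearMap.ker P = Mixed.traceSpan0 N m n) :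
    P ∈ Mixed.Cent N m n ∧
    (∀ f ∈ Mixed.Cent N m n, P * f = f * P) ∧
    (∀ (p : Equiv.Perm (Fin m)) (q : Equiv.Perm (Fin n)),
      P * (Mixed.permU N m n p * Mixed.permD N m n q) =
        (Mixed.permU N m n p * Mixed.permD N m n q) * P) := by
  have : NeZero N := ⟨by lia⟩
  have commute_diagram (σ) : Commute P (Mixed.diagram N σ) :=
    Mixed.commute_of_range_eq_of_ker_eq hidem hrange hker
      (Mixed.exists_tauC_mul_diagram_eq σ) (Mixed.exists_diagram_mul_tauC_eq σ)
  have commute_glAct (g) : Commute P (Mixed.glAct N m n g) :=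
    Mixed.commute_of_range_eq_of_ker_eq hidem hrange hker
      (fun a b ↦ ⟨a, b, _, Mixed.tauC_mul_glAct a b g⟩)
      (fun a b ↦ ⟨a, b, _, (Mixed.tauC_mul_glAct a b g).symm⟩)
  refine ⟨?_, fun f hf ↦ (Mixed.commute_of_mem_Cent commute_diagram hf).eq, fun p q ↦ ?_⟩
  · rintro _ ⟨g, rfl⟩
    exact (commute_glAct g).eq.symm
  · rw [← inv_inv q, ← Mixed.diagram_sumCongr]
    exact (commute_diagram _).eq
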